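/- Let p be an odd prime and m, n ∈ ℕ. Then K_1(C_{p^m} ⊕ C_2^n) = Σ_{k=1}^m 1/p^{k−1} + n = (p^m − 1)/(p^m − p^{m−1}) + n. -/

import Mathlib

open Finset

/-- `S(I)` is minimal zero-sum: nonempty, zero-sum, and no proper nonempty
subfamily is zero-sum. -/
def IsMinZeroSum {G : Type*} [AddCommGroup G] {ℓ : ℕ} (g : Fin ℓ → G)
    (I : Finset (Fin ℓ)) : Prop :=
  I.Nonempty ∧ ∑ i ∈ I, g i = 0 ∧ ∀ J ⊂ I, J.Nonempty → ∑ i ∈ J, g i ≠ 0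

/-- `P` is an irreducible factorization of the indexed multiset `g`: a partition
of the index set all of whose parts are minimal zero-sum. -/
def IsFactorization {G : Type*} [AddCommGroup G] {ℓ : ℕ} (g : Fin ℓ → G)
    (P : Finpartition (Finset.univ : Finset (Fin ℓ))) : Prop :=
  ∀ I ∈ P.parts, IsMinZeroSum g I

/-- `g` is a unique factorization indexed multiset (UFIM) over `G∖{0}`:
all elements are nonzero and there is exactly one irreducible factorization. -/
def IsUFIM {G : Type*} [AddCommGroup G] {ℓ : ℕ} (g : Fin ℓ → G) : Prop :=
  (∀ i, g i ≠ 0) ∧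
  ∃! P : Finpartition (Finset.univ : Finset (Fin ℓ)), IsFactorization g P

/-- The cross number `k(S) = ∑ 1/ord(g_i)`. -/
noncomputable def crossNum {G : Type*} [AddCommGroup G] {ℓ : ℕ} (g : Fin ℓ → G) : ℝ :=
  ∑ i, (1 : ℝ) / (addOrderOf (g i) : ℝ)

/-- `K₁(G)`: the maximal cross number of a UFIM over `G∖{0}`. -/
noncomputable def K1 (G : Type*) [AddCommGroup G] : ℝ :=
  sSup {x : ℝ | ∃ (ℓ : ℕ) (g : Fin ℓ → G), IsUFIM g ∧ crossNum g = x}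

/-- `N₁(G)`: the maximal length of a UFIM over `G∖{0}`. -/
noncomputable def N1 (G : Type*) [AddCommGroup G] : ℕ :=
  sSup {n : ℕ | ∃ g : Fin n → G, IsUFIM g}

/-- `K(G)`: the maximal cross number of a minimal zero-sum indexed multiset over `G∖{0}`. -/
noncomputable def Kcross (G : Type*) [AddCommGroup G] : ℝ :=
  sSup {x : ℝ | ∃ (ℓ : ℕ) (g : Fin ℓ → G), (∀ i, g i ≠ 0) ∧
    IsMinZeroSum g Finset.univ ∧ crossNum g = x}

/-- `g` is zero-sum free: no nonempty subfamily is zero-sum. -/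
def IsZeroSumFree {G : Type*} [AddCommGroup G] {ℓ : ℕ} (g : Fin ℓ → G) : Prop :=
  ∀ I : Finset (Fin ℓ), I.Nonempty → ∑ i ∈ I, g i ≠ 0

/-- The little cross number `k(G)`: the maximal cross number of a zero-sum free
indexed multiset over `G∖{0}`. -/
noncomputable def littleCross (G : Type*) [AddCommGroup G] : ℝ :=
  sSup {x : ℝ | ∃ (ℓ : ℕ) (g : Fin ℓ → G), (∀ i, g i ≠ 0) ∧
    IsZeroSumFree g ∧ crossNum g = x}

/-!
A zero-sum family of nonzero elements has a unique factorization exactly when its zero-sum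
subfamilies are closed under intersection. This property survives adding up entries.

For the upper bound, induct on `m`. Adding up entries not killed by `N = 2 * p ^ k`, as long as
the sum is killed by `N` and the total weight does not drop, we may assume that every such step
strictly decreases the weight. Multiplication by `N` then maps suitable sets of remaining entries
to families of elements of order `p` in which unique factorization persists, and by Narkiewicz'
bound such a family has at most `p` members. Hence each step of the induction costs at most
`1 / p ^ k`. When `m = 0`, a zero-sum-free family in an elementary abelian 2-group is linearly
independent, and at least half of the nonzero entries form such a family.

For the lower bound, climb a chain of subgroups: if `q` is the order of `x` modulo `H`, then `q - 1`
copies of `x` together with `(1 - q) • x` can be appended to any family in `H`.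
-/

section ZeroSums

variable {ι G : Type*} [AddCommGroup G]

/-- The subfamily of `g` indexed by `X` has no nonempty zero-sum subfamily. -/
def ZeroSumFreeOn (g : ι → G) (X : Finset ι) : Prop :=
  ∀ A ⊆ X, ∑ i ∈ A, g i = 0 → A = ∅

/-- The zero-sum subfamilies of `g` inside `X` are closed under intersection. -/
def InterClosed [DecidableEq ι] (g : ι → G) (X : Finset ι) : Prop :=
  ∀ A ⊆ X, ∀ B ⊆ X, ∑ i ∈ A, g i = 0 → ∑ i ∈ B, g i = 0 → ∑ i ∈ A ∩ B, g i = 0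

/-- A zero-sum family whose zero-sum subfamilies are closed under intersection. By `isUFIM_iff`
these are the unique factorization indexed multisets, except that entries may vanish; this keeps
the index set fixed when entries are merged into one. -/
def IsUF [Fintype ι] [DecidableEq ι] (g : ι → G) : Prop :=
  ∑ i, g i = 0 ∧ InterClosed g univ

variable {g : ι → G} {X Y : Finset ι}

lemma ZeroSumFreeOn.mono (h : ZeroSumFreeOn g X) (hYX : Y ⊆ X) : ZeroSumFreeOn g Y :=
  fun A hA => h A (hA.trans hYX)

variable [DecidableEq ι]

lemma InterClosed.mono (h : InterClosed g X) (hYX : Y ⊆ X) : InterClosed g Y :=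
  fun A hA B hB => h A (hA.trans hYX) B (hB.trans hYX)

lemma IsUF.interClosed [Fintype ι] (h : IsUF g) (X : Finset ι) : InterClosed g X :=
  h.2.mono (subset_univ X)

end ZeroSums

section Factorizations

variable {G : Type*} [AddCommGroup G] {ℓ : ℕ} {g : Fin ℓ → G} {A I J : Finset (Fin ℓ)}

lemma isMinZeroSum_iff_minimal :
    IsMinZeroSum g I ↔ Minimal (fun J => J.Nonempty ∧ ∑ i ∈ J, g i = 0) I := by
  refine ⟨fun ⟨hne, h0, hmin⟩ => ⟨⟨hne, h0⟩, fun J hJ hJI => ?_⟩, fun h =>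
    ⟨h.prop.1, h.prop.2, fun J hJ hne h0 => h.not_prop_of_lt hJ ⟨hne, h0⟩⟩⟩
  by_contra hIJ
  exact hmin J ⟨hJI, hIJ⟩ hJ.1 hJ.2

lemma exists_isMinZeroSum_subset (hne : A.Nonempty) (h0 : ∑ i ∈ A, g i = 0) :
    ∃ I ⊆ A, IsMinZeroSum g I := by
  simpa only [isMinZeroSum_iff_minimal] using exists_minimal_le_of_wellFoundedLT
    (fun J : Finset (Fin ℓ) => J.Nonempty ∧ ∑ i ∈ J, g i = 0) A ⟨hne, h0⟩

lemma exists_finpartition_isMinZeroSum (h0 : ∑ i ∈ A, g i = 0) :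
    ∃ P : Finpartition A, ∀ I ∈ P.parts, IsMinZeroSum g I := by
  induction A using Finset.strongInduction with
  | H A ih =>
    obtain rfl | hne := A.eq_empty_or_nonempty
    · exact ⟨Finpartition.empty _, by simp⟩
    obtain ⟨I, hIA, hI⟩ := exists_isMinZeroSum_subset hne h0
    obtain ⟨P, hP⟩ := ih (A \ I) (sdiff_ssubset hIA hI.1)
      (by rw [sum_sdiff_eq_sub hIA, h0, hI.2.1, sub_zero])
    refine ⟨P.extend hI.1.ne_empty sdiff_disjoint (sdiff_union_of_subset hIA), fun J hJ => ?_⟩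
    obtain rfl | hJ := mem_insert.1 hJ
    exacts [hI, hP J hJ]

lemma IsMinZeroSum.exists_isFactorization (hI : IsMinZeroSum g I) (h0 : ∑ i, g i = 0) :
    ∃ P, IsFactorization g P ∧ I ∈ P.parts := by
  obtain ⟨P, hP⟩ := exists_finpartition_isMinZeroSum (g := g) (A := univ \ I)
    (by rw [sum_sdiff_eq_sub (subset_univ I), h0, hI.2.1, sub_zero])
  refine ⟨P.extend hI.1.ne_empty sdiff_disjoint (sdiff_union_of_subset (subset_univ I)),
    fun J hJ => ?_, mem_insert_self _ _⟩
  obtain rfl | hJ := mem_insert.1 hJ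
  exacts [hI, hP J hJ]

lemma sum_finpartition_parts (P : Finpartition A) :
    ∑ I ∈ P.parts, ∑ i ∈ I, g i = ∑ i ∈ A, g i := by
  conv_rhs => rw [← P.biUnion_parts, sum_biUnion P.disjoint]
  rfl

lemma IsMinZeroSum.eq_of_mem {i : Fin ℓ} (hg : IsUF g) (hI : IsMinZeroSum g I)
    (hJ : IsMinZeroSum g J) (hiI : i ∈ I) (hiJ : i ∈ J) : I = J := by
  have hIJ : (I ∩ J).Nonempty ∧ ∑ i ∈ I ∩ J, g i = 0 :=
    ⟨⟨i, mem_inter.2 ⟨hiI, hiJ⟩⟩,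
      hg.2 I (subset_univ I) J (subset_univ J) hI.2.1 hJ.2.1⟩
  rw [isMinZeroSum_iff_minimal] at hI hJ
  exact (hI.eq_of_ge hIJ inter_subset_left).trans (hJ.eq_of_ge hIJ inter_subset_right).symm

lemma IsUF.parts_subset (hg : IsUF g) {P Q : Finpartition (univ : Finset (Fin ℓ))}
    (hP : IsFactorization g P) (hQ : IsFactorization g Q) : P.parts ⊆ Q.parts := fun I hI => by
  obtain ⟨i, hi⟩ := (hP I hI).1
  obtain ⟨J, hJ, hiJ⟩ := Q.exists_mem (mem_univ i)
  rwa [(hP I hI).eq_of_mem hg (hQ J hJ) hi hiJ]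

lemma interClosed_of_forall_subset_or_disjoint {P : Finpartition (univ : Finset (Fin ℓ))}
    (hP : IsFactorization g P)
    (h : ∀ A, ∑ i ∈ A, g i = 0 → ∀ I ∈ P.parts, I ⊆ A ∨ Disjoint I A) :
    InterClosed g univ := fun A _ B _ hA hB => by
  calc ∑ i ∈ A ∩ B, g i = ∑ i, if i ∈ A ∩ B then g i else 0 := by rw [sum_ite_mem, univ_inter]
    _ = ∑ I ∈ P.parts, ∑ i ∈ I, if i ∈ A ∩ B then g i else 0 := (sum_finpartition_parts P).symm
    _ = 0 := sum_eq_zero fun I hI => by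
      rw [sum_ite_mem]
      obtain hIA | hIA := h A hA I hI
      · obtain hIB | hIB := h B hB I hI
        · rw [inter_eq_left.2 (subset_inter hIA hIB), (hP I hI).2.1]
        · rw [disjoint_iff_inter_eq_empty.1 (hIB.mono_right inter_subset_right), sum_empty]
      · rw [disjoint_iff_inter_eq_empty.1 (hIA.mono_right inter_subset_left), sum_empty]

/-- Unique factorization means that no two distinct minimal zero-sum subfamilies meet. -/
theorem isUFIM_iff : IsUFIM g ↔ (∀ i, g i ≠ 0) ∧ IsUF g := by
  refine and_congr_right fun _ => ⟨fun ⟨P, hP, hunique⟩ => ?_, fun hg => ?_⟩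
  · have h0 : ∑ i, g i = 0 := by
      rw [← sum_finpartition_parts P]
      exact sum_eq_zero fun I hI => (hP I hI).2.1
    refine ⟨h0, interClosed_of_forall_subset_or_disjoint hP fun A hA I hI => ?_⟩
    rw [or_iff_not_imp_right, not_disjoint_iff]
    rintro ⟨i, hiI, hiA⟩
    obtain ⟨Q, hQ⟩ := exists_finpartition_isMinZeroSum hA
    obtain ⟨J, hJ, hiJ⟩ := Q.exists_mem hiA
    obtain ⟨P', hP', hJP'⟩ := (hQ J hJ).exists_isFactorization h0
    rw [hunique P' hP'] at hJP'
    exact P.eq_of_mem_parts hI hJP' hiI hiJ ▸ Q.subset hJ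
  · obtain ⟨P, hP⟩ := exists_finpartition_isMinZeroSum hg.1
    exact ⟨P, hP, fun Q hQ => Finpartition.ext
      ((hg.parts_subset hQ hP).antisymm (hg.parts_subset hP hQ))⟩

end Factorizations

section SumChains

variable {ι G : Type*} [AddCommGroup G] [DecidableEq G]

/-- The set of sums of the subfamilies of `g` inside `X`. Mathlib's `Finset.subsetSum` concerns
sets of elements, hence does not allow for repetitions. -/
def subsetSums (g : ι → G) (X : Finset ι) : Finset G :=
  X.powerset.image fun A => ∑ i ∈ A, g i

/-- A set `E` of subset sums of `g` over `X` such that, for any two of its elements, one of the two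
differences is again a subset sum. The sums of an increasing sequence of subfamilies are the
typical example; their pointwise sums are needed as well. -/
def IsSumChain (g : ι → G) (X : Finset ι) (E : Finset G) : Prop :=
  E ⊆ subsetSums g X ∧
    ∀ e ∈ E, ∀ e' ∈ E, e - e' ∈ subsetSums g X ∨ e' - e ∈ subsetSums g X

variable {g : ι → G} {X Y J K : Finset ι} {E F : Finset G} {x y : G}

lemma mem_subsetSums : x ∈ subsetSums g X ↔ ∃ A ⊆ X, ∑ i ∈ A, g i = x := by
  simp only [subsetSums, mem_image, mem_powerset]

lemma subsetSums_mono (hXY : X ⊆ Y) : subsetSums g X ⊆ subsetSums g Y :=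
  image_subset_image (powerset_mono.2 hXY)

lemma IsSumChain.mono (hE : IsSumChain g X E) (hXY : X ⊆ Y) : IsSumChain g Y E :=
  ⟨hE.1.trans (subsetSums_mono hXY), fun e he e' he' =>
    (hE.2 e he e' he').imp (subsetSums_mono hXY ·) (subsetSums_mono hXY ·)⟩

lemma isSumChain_zero : IsSumChain g X {0} := by
  have h0 : (0 : G) ∈ subsetSums g X := mem_subsetSums.2 ⟨∅, empty_subset X, sum_empty⟩
  simpa [IsSumChain] using h0

lemma sub_mem_subsetSums (hx : x ∈ subsetSums g X) : ∑ i ∈ X, g i - x ∈ subsetSums g X := by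
  classical
  obtain ⟨A, hA, rfl⟩ := mem_subsetSums.1 hx
  exact mem_subsetSums.2 ⟨X \ A, sdiff_subset, sum_sdiff_eq_sub hA⟩

lemma neg_mem_subsetSums (h0 : ∑ i ∈ X, g i = 0) (hx : x ∈ subsetSums g X) :
    -x ∈ subsetSums g X := by
  simpa only [h0, zero_sub] using sub_mem_subsetSums hx

lemma IsSumChain.sub_mem (hE : IsSumChain g X E) (h0 : ∑ i ∈ X, g i = 0) (hx : x ∈ E)
    (hy : y ∈ E) : x - y ∈ subsetSums g X :=
  (hE.2 x hx y hy).elim id fun h => neg_sub y x ▸ neg_mem_subsetSums h0 h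

lemma ZeroSumFreeOn.exists_isSumChain (h : ZeroSumFreeOn g X) :
    ∃ E, IsSumChain g X E ∧ #E = #X + 1 := by
  classical
  induction X using Finset.induction with
  | empty => exact ⟨{0}, isSumChain_zero, rfl⟩
  | insert i X hi ih =>
    obtain ⟨E, hE, hcard⟩ := ih (h.mono (subset_insert i X))
    have hE' := hE.mono (subset_insert i X)
    have hsum : ∑ j ∈ insert i X, g j ∈ subsetSums g (insert i X) :=
      mem_subsetSums.2 ⟨_, Subset.rfl, rfl⟩
    have h0 : (0 : G) ∈ subsetSums g (insert i X) := isSumChain_zero.1 (mem_singleton_self 0)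
    refine ⟨insert (∑ j ∈ insert i X, g j) E, ⟨insert_subset hsum hE'.1, ?_⟩, ?_⟩
    · simp only [forall_mem_insert, sub_self, h0, true_or, true_and]
      exact ⟨fun e he => .inl (sub_mem_subsetSums (hE'.1 he)), fun e he =>
        ⟨.inr (sub_mem_subsetSums (hE'.1 he)), hE'.2 e he⟩⟩
    · rw [card_insert_of_notMem, card_insert_of_notMem hi, hcard]
      intro hmem
      obtain ⟨A, hA, hsumA⟩ := mem_subsetSums.1 (hE.1 hmem)
      have hempty := h (insert i X \ A) sdiff_subset
        (by rw [sum_sdiff_eq_sub (hA.trans (subset_insert i X)), hsumA, sub_self])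
      exact hi (hA (sdiff_eq_empty_iff_subset.1 hempty (mem_insert_self i X)))

lemma exists_isSumChain_of_minimal
    (hJ : Minimal (fun J : Finset ι => J.Nonempty ∧ ∑ i ∈ J, g i = 0) J)
    (hne : ∀ i ∈ J, g i ≠ 0) : ∃ E, IsSumChain g J E ∧ #E = #J ∧ 2 ≤ #E := by
  classical
  obtain ⟨i, hi⟩ := hJ.prop.1
  have hfree : ZeroSumFreeOn g (J.erase i) := fun A hA hA0 => by
    by_contra hAne
    exact hJ.not_prop_of_lt (hA.trans_ssubset (erase_ssubset hi))
      ⟨nonempty_iff_ne_empty.2 hAne, hA0⟩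
  have herase : (J.erase i).Nonempty := by
    rw [nonempty_iff_ne_empty]
    intro hempty
    exact hne i hi (by rw [← hJ.prop.2, ← add_sum_erase J g hi, hempty, sum_empty, add_zero])
  obtain ⟨E, hE, hcard⟩ := hfree.exists_isSumChain
  have hpos := herase.card_pos
  exact ⟨E, hE.mono (erase_subset i J), hcard.trans (card_erase_add_one hi), by lia⟩

variable [DecidableEq ι]

lemma add_mem_subsetSums (hJK : Disjoint J K) (hx : x ∈ subsetSums g J)
    (hy : y ∈ subsetSums g K) : x + y ∈ subsetSums g (J ∪ K) := by
  obtain ⟨A, hA, rfl⟩ := mem_subsetSums.1 hx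
  obtain ⟨B, hB, rfl⟩ := mem_subsetSums.1 hy
  exact mem_subsetSums.2 ⟨A ∪ B, union_subset_union hA hB, sum_union (hJK.mono hA hB)⟩

open scoped Pointwise

lemma IsSumChain.add (hE : IsSumChain g J E) (hF : IsSumChain g K F) (hJK : Disjoint J K)
    (h0 : ∑ i ∈ J, g i = 0) : IsSumChain g (J ∪ K) (E + F) := by
  refine ⟨add_subset_iff.2 fun x hx y hy => add_mem_subsetSums hJK (hE.1 hx) (hF.1 hy), ?_⟩
  intro e he e' he'
  obtain ⟨x, hx, y, hy, rfl⟩ := mem_add.1 he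
  obtain ⟨x', hx', y', hy', rfl⟩ := mem_add.1 he'
  simp only [add_sub_add_comm]
  exact (hF.2 y hy y' hy').imp (add_mem_subsetSums hJK (hE.sub_mem h0 hx hx'))
    (add_mem_subsetSums hJK (hE.sub_mem h0 hx' hx))

lemma InterClosed.eq_zero_of_add_eq_zero (hg : InterClosed g (J ∪ K)) (hJK : Disjoint J K)
    (h0 : ∑ i ∈ J, g i = 0) (hx : x ∈ subsetSums g J) (hy : y ∈ subsetSums g K)
    (hxy : x + y = 0) : x = 0 ∧ y = 0 := by
  obtain ⟨A, hA, rfl⟩ := mem_subsetSums.1 hx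
  obtain ⟨B, hB, rfl⟩ := mem_subsetSums.1 hy
  have hsumA : ∑ i ∈ A, g i = 0 := by
    have := hg (A ∪ B) (union_subset_union hA hB) J subset_union_left
      (by rwa [sum_union (hJK.mono hA hB)]) h0
    rwa [union_inter_distrib_right, inter_eq_left.2 hA,
      disjoint_iff_inter_eq_empty.1 (hJK.symm.mono_left hB), union_empty] at this
  exact ⟨hsumA, by rwa [hsumA, zero_add] at hxy⟩

lemma IsSumChain.card_add (hE : IsSumChain g J E) (hF : IsSumChain g K F) (hJK : Disjoint J K)
    (h0 : ∑ i ∈ J, g i = 0) (hg : InterClosed g (J ∪ K)) : #(E + F) = #E * #F := by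
  refine card_add_iff.2 ?_
  rintro ⟨x, y⟩ ⟨hx, hy⟩ ⟨x', y'⟩ ⟨hx', hy'⟩ (heq : x + y = x' + y')
  have hsub : x - x' + (y - y') = 0 := by rw [← add_sub_add_comm, heq, sub_self]
  obtain ⟨hxx', hyy'⟩ : x - x' = 0 ∧ y - y' = 0 := by
    obtain h | h := hF.2 y hy y' hy'
    · exact hg.eq_zero_of_add_eq_zero hJK h0 (hE.sub_mem h0 hx hx') h hsub
    · obtain ⟨h₁, h₂⟩ := hg.eq_zero_of_add_eq_zero hJK h0 (hE.sub_mem h0 hx' hx) h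
        (by rw [← neg_sub x, ← neg_sub y, ← neg_add, hsub, neg_zero])
      exact ⟨sub_eq_zero.2 (sub_eq_zero.1 h₁).symm, sub_eq_zero.2 (sub_eq_zero.1 h₂).symm⟩
  rw [sub_eq_zero.1 hxx', sub_eq_zero.1 hyy']

/-- A minimal zero-sum subfamily of length `k` contributes a chain with `k` elements, which is
multiplied with the chain of the remaining entries. -/
lemma InterClosed.exists_isSumChain (hg : InterClosed g X) (hne : ∀ i ∈ X, g i ≠ 0)
    (hX : X.Nonempty) : ∃ E, IsSumChain g X E ∧ #X ≤ #E ∧ 2 ≤ #E := by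
  induction X using Finset.strongInduction with
  | H X ih =>
    by_cases hfree : ZeroSumFreeOn g X
    · obtain ⟨E, hE, hcard⟩ := hfree.exists_isSumChain
      exact ⟨E, hE, by lia, by have := hX.card_pos; lia⟩
    obtain ⟨A, hAX, hA0, hA⟩ : ∃ A ⊆ X, ∑ i ∈ A, g i = 0 ∧ A ≠ ∅ := by
      simpa [ZeroSumFreeOn] using hfree
    obtain ⟨J, hJA, hJ⟩ := exists_minimal_le_of_wellFoundedLT
      (fun J : Finset ι => J.Nonempty ∧ ∑ i ∈ J, g i = 0) A ⟨nonempty_iff_ne_empty.2 hA, hA0⟩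
    have hJX := hJA.trans hAX
    obtain ⟨E, hE, hcard, htwo⟩ := exists_isSumChain_of_minimal hJ (fun i hi => hne i (hJX hi))
    obtain hK | hK := (X \ J).eq_empty_or_nonempty
    · rw [← hJX.antisymm (sdiff_eq_empty_iff_subset.1 hK)]
      exact ⟨E, hE, hcard.ge, htwo⟩
    obtain ⟨F, hF, hcardF, htwoF⟩ := ih (X \ J) (sdiff_ssubset hJX hJ.prop.1)
      (hg.mono sdiff_subset) (fun i hi => hne i (mem_sdiff.1 hi).1) hK
    have hunion := union_sdiff_of_subset hJX
    refine ⟨E + F, hunion ▸ hE.add hF disjoint_sdiff hJ.prop.2, ?_⟩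
    rw [hE.card_add hF disjoint_sdiff hJ.prop.2 (hunion.symm ▸ hg)]
    have := card_sdiff_add_card_eq_card hJX
    constructor <;> nlinarith

/-- Narkiewicz' bound on the length of a family with unique factorization. -/
theorem InterClosed.card_le_card_nsmul_eq_zero [Fintype G] {p : ℕ} (hg : InterClosed g X)
    (hne : ∀ i ∈ X, g i ≠ 0) (hp : ∀ i ∈ X, p • g i = 0) : #X ≤ #{x : G | p • x = 0} := by
  obtain rfl | hX := X.eq_empty_or_nonempty
  · simp
  obtain ⟨E, hE, hcard, -⟩ := hg.exists_isSumChain hne hX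
  refine hcard.trans (card_le_card fun e he => ?_)
  obtain ⟨A, hA, rfl⟩ := mem_subsetSums.1 (hE.1 he)
  simp only [mem_filter_univ, smul_sum, sum_eq_zero fun i hi => hp i (hA hi)]

end SumChains

section TwoTorsion

variable {ι G : Type*} [AddCommGroup G] {g : ι → G} {X Y : Finset ι}

lemma ZeroSumFreeOn.two_pow_card_le [Fintype G] [DecidableEq G] (h : ZeroSumFreeOn g Y)
    (h2 : ∀ i ∈ Y, 2 • g i = 0) : 2 ^ #Y ≤ #{x : G | 2 • x = 0} := by
  classical
  rw [← card_powerset]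
  have hsum {A : Finset ι} (hA : A ⊆ Y) : 2 • ∑ i ∈ A, g i = 0 := by
    rw [smul_sum, sum_eq_zero fun i hi => h2 i (hA hi)]
  refine card_le_card_of_injOn (fun A => ∑ i ∈ A, g i) (fun A hA => ?_) fun A hA B hB hAB => ?_
  · simpa using hsum (mem_powerset.1 hA)
  · simp only [coe_powerset, Set.mem_preimage, Set.mem_powerset_iff, coe_subset] at hA hB
    have h0 : ∑ i ∈ A \ B ∪ B \ A, g i = 0 := by
      rw [sum_union disjoint_sdiff_sdiff]
      calc ∑ i ∈ A \ B, g i + ∑ i ∈ B \ A, g i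
          = (∑ i ∈ A \ B, g i - ∑ i ∈ B \ A, g i) + 2 • ∑ i ∈ B \ A, g i := by abel
        _ = 0 := by
          rw [sum_sdiff_sub_sum_sdiff, sub_eq_zero.2 hAB, hsum (sdiff_subset.trans hB), add_zero]
    have hempty := h _ (union_subset (sdiff_subset.trans hA) (sdiff_subset.trans hB)) h0
    rw [union_eq_empty, sdiff_eq_empty_iff_subset, sdiff_eq_empty_iff_subset] at hempty
    exact hempty.1.antisymm hempty.2

variable [DecidableEq ι]

lemma exists_sum_eq_zero_of_maximal
    (hY : Maximal (fun Y => Y ⊆ X ∧ ZeroSumFreeOn g Y) Y) {x : ι} (hx : x ∈ X \ Y)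
    (hgx : g x ≠ 0) : ∃ C ⊆ insert x Y, ∑ i ∈ C, g i = 0 ∧ ¬ Disjoint C Y := by
  obtain ⟨hxX, hxY⟩ := mem_sdiff.1 hx
  have hnot : ¬ ZeroSumFreeOn g (insert x Y) := fun hfree =>
    hY.not_prop_of_gt (ssubset_insert hxY) ⟨insert_subset hxX hY.prop.1, hfree⟩
  obtain ⟨C, hC, hC0, hCne⟩ : ∃ C ⊆ insert x Y, ∑ i ∈ C, g i = 0 ∧ C ≠ ∅ := by
    simpa [ZeroSumFreeOn] using hnot
  refine ⟨C, hC, hC0, fun hCY => ?_⟩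
  obtain rfl | rfl := subset_singleton_iff.1
    (hCY.left_le_of_le_sup_right (insert_eq x Y ▸ hC))
  exacts [hCne rfl, hgx (by rwa [sum_singleton] at hC0)]

/-- Every entry outside a maximal zero-sum-free subfamily `Y` completes part of `Y` to a zero-sum
subfamily, and these parts are pairwise disjoint. -/
lemma InterClosed.exists_zeroSumFreeOn (hg : InterClosed g X) (hne : ∀ i ∈ X, g i ≠ 0) :
    ∃ Y ⊆ X, ZeroSumFreeOn g Y ∧ #X ≤ 2 * #Y := by
  obtain ⟨Y, hY⟩ : ∃ Y, Maximal (fun Y => Y ⊆ X ∧ ZeroSumFreeOn g Y) Y :=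
    (X.powerset.finite_toSet.subset fun Y hY => mem_powerset.2 hY.1).exists_maximal
      ⟨∅, empty_subset X, fun A hA _ => subset_empty.1 hA⟩
  obtain ⟨hYX, hYfree⟩ := hY.prop
  choose! C hC hC0 hCY using fun x (hx : x ∈ X \ Y) =>
    exists_sum_eq_zero_of_maximal hY hx (hne x (mem_sdiff.1 hx).1)
  choose! y hyC hyY using fun x hx => not_disjoint_iff.1 (hCY x hx)
  have hinj : Set.InjOn y (X \ Y : Finset ι) := fun x hx x' hx' hxx' => by
    by_contra hne'
    have h0 : ∑ i ∈ C x ∩ C x', g i = 0 :=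
      hg _ ((hC x hx).trans (by grind)) _ ((hC x' hx').trans (by grind)) (hC0 x hx) (hC0 x' hx')
    have hempty : C x ∩ C x' = ∅ := hYfree _ (by grind) h0
    exact notMem_empty (y x) (hempty ▸ mem_inter.2 ⟨hyC x hx, hxx' ▸ hyC x' hx'⟩)
  have hcard : #(X \ Y) ≤ #Y := card_le_card_of_injOn y hyY hinj
  have := card_sdiff_add_card_eq_card hYX
  exact ⟨Y, hYX, hYfree, by lia⟩

end TwoTorsion

section Weight

variable {ι G : Type*} [AddCommGroup G] {x : G} {N p d : ℕ}

/-- The contribution of `x` to a cross number, with the convention that `0` contributes nothing. -/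
noncomputable def weight (x : G) : ℝ :=
  if addOrderOf x = 1 then 0 else 1 / addOrderOf x

lemma weight_zero : weight (0 : G) = 0 := by simp [weight]

lemma weight_of_ne_zero (hx : x ≠ 0) : weight x = 1 / addOrderOf x := by simp [weight, hx]

lemma weight_nonneg (x : G) : 0 ≤ weight x := by
  unfold weight
  positivity

lemma one_div_le_weight (hx : x ≠ 0) (hN : 0 < N) (hNx : N • x = 0) : 1 / (N : ℝ) ≤ weight x := by
  rw [weight_of_ne_zero hx]
  have hpos : 0 < addOrderOf x := addOrderOf_pos_iff.2 (isOfFinAddOrder_iff_nsmul_eq_zero.2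
    ⟨N, hN, hNx⟩)
  gcongr
  exact addOrderOf_le_of_nsmul_eq_zero hN hNx

lemma weight_le_one_div (h : N ∣ addOrderOf x) : weight x ≤ 1 / (N : ℝ) := by
  unfold weight
  split_ifs
  · positivity
  obtain h0 | hpos := (addOrderOf x).eq_zero_or_pos
  · simp [h0]
  have hN : 0 < N := Nat.pos_of_dvd_of_pos h hpos
  gcongr
  exact Nat.le_of_dvd hpos h

lemma sum_weight_le_one_div {g : ι → G} {X : Finset ι} (hp : 0 < p) (hX : #X ≤ p)
    (h : ∀ i ∈ X, p * d ∣ addOrderOf (g i)) : ∑ i ∈ X, weight (g i) ≤ 1 / (d : ℝ) := by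
  calc ∑ i ∈ X, weight (g i) ≤ #X • (1 / ((p * d : ℕ) : ℝ)) :=
        sum_le_card_nsmul _ _ _ fun i hi => weight_le_one_div (h i hi)
    _ ≤ p * (1 / ((p * d : ℕ) : ℝ)) := by rw [nsmul_eq_mul]; gcongr
    _ = 1 / (d : ℝ) := by push_cast; field_simp

lemma prime_pow_dvd_addOrderOf {k a : ℕ} (hp : p.Prime) (hne : p ^ k • a • x ≠ 0)
    (h0 : p ^ (k + 1) • a • x = 0) : p ^ (k + 1) ∣ addOrderOf x :=
  have := Fact.mk hp
  addOrderOf_eq_prime_pow hne h0 ▸ addOrderOf_smul_dvd a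

theorem InterClosed.sum_weight_le_of_two_nsmul [Fintype ι] [DecidableEq ι] [Fintype G]
    [DecidableEq G] {g : ι → G} {n : ℕ} (hg : InterClosed g univ) (h2 : ∀ i, 2 • g i = 0)
    (hn : #{x : G | 2 • x = 0} ≤ 2 ^ n) : ∑ i, weight (g i) ≤ n := by
  obtain ⟨Y, -, hYfree, hcard⟩ :=
    (hg.mono (subset_univ {i | g i ≠ 0})).exists_zeroSumFreeOn (by simp)
  have hY : #Y ≤ n := (Nat.pow_le_pow_iff_right one_lt_two).1
    ((hYfree.two_pow_card_le fun i _ => h2 i).trans hn)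
  have hord : ∀ i ∈ ({i | g i ≠ 0} : Finset ι), weight (g i) ≤ 1 / (2 : ℝ) := fun i hi => by
    have := addOrderOf_eq_prime (h2 i) (mem_filter.1 hi).2
    exact_mod_cast weight_le_one_div this.symm.dvd
  calc ∑ i, weight (g i) = ∑ i with g i ≠ 0, weight (g i) :=
        (sum_filter_of_ne (p := fun i => g i ≠ 0) fun i _ hi h0 =>
          hi (by rw [h0, weight_zero])).symm
    _ ≤ #{i | g i ≠ 0} • (1 / (2 : ℝ)) := sum_le_card_nsmul _ _ _ hord
    _ ≤ (2 * n : ℕ) • (1 / (2 : ℝ)) := by gcongr; lia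
    _ = n := by rw [nsmul_eq_mul]; push_cast; ring

end Weight

section Merging

variable {ι κ G : Type*} [AddCommGroup G] [Fintype ι]

/-- The family indexed by `κ` obtained from `g` by adding up its entries along the fibres of `f`. -/
def pushforward [DecidableEq κ] (f : ι → κ) (g : ι → G) (k : κ) : G :=
  ∑ i with f i = k, g i

variable {g : ι → G}

lemma sum_pushforward [DecidableEq κ] (f : ι → κ) (A : Finset κ) :
    ∑ k ∈ A, pushforward f g k = ∑ i with f i ∈ A, g i :=
  sum_fiberwise_eq_sum_filter univ A f g

protected lemma IsUF.pushforward [DecidableEq ι] [Fintype κ] [DecidableEq κ] (hg : IsUF g)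
    (f : ι → κ) : IsUF (pushforward f g) := by
  refine ⟨by simpa [sum_pushforward] using hg.1, fun A _ B _ hA hB => ?_⟩
  rw [sum_pushforward] at hA hB ⊢
  simpa only [mem_inter, filter_and] using
    hg.2 _ (subset_univ _) _ (subset_univ _) hA hB

variable [DecidableEq ι]

/-- The entries indexed by `T` are merged into a single one and replaced by zeros. -/
lemma IsUF.exists_merge (hg : IsUF g) (T : Finset ι) :
    ∃ g' : ι → G, IsUF g' ∧ (∀ i ∉ T, g' i = g i) ∧
      (∀ i ∈ T, g' i = 0 ∨ g' i = ∑ j ∈ T, g j) ∧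
      ∑ i ∈ T, weight (g' i) = weight (∑ j ∈ T, g j) := by
  obtain rfl | ⟨t, ht⟩ := T.eq_empty_or_nonempty
  · exact ⟨g, hg, by simp, by simp, by simp [weight_zero]⟩
  let f : ι → ι := fun i => if i ∈ T then t else i
  have hft : pushforward f g t = ∑ j ∈ T, g j :=
    sum_congr (by grind) fun _ _ => rfl
  have hf0 : ∀ i ∈ T, i ≠ t → pushforward f g i = 0 := fun i hi hit =>
    sum_eq_zero fun j hj => by grind
  refine ⟨pushforward f g, hg.pushforward f, fun i hi => ?_, fun i hi => ?_, ?_⟩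
  · exact (sum_congr (show _ = {i} by grind) fun _ _ => rfl).trans (sum_singleton g i)
  · obtain rfl | hit := eq_or_ne i t
    exacts [.inr hft, .inl (hf0 i hi hit)]
  · rw [sum_eq_single_of_mem t ht fun i hi hit => by rw [hf0 i hi hit, weight_zero], hft]

/-- A family in which merging entries that are not killed by `N` into one that is killed by `N`
always decreases the total weight. -/
def MergeReduced (N : ℕ) (g : ι → G) : Prop :=
  ∀ T : Finset ι, T.Nonempty → (∀ i ∈ T, N • g i ≠ 0) → N • ∑ i ∈ T, g i = 0 →
    weight (∑ i ∈ T, g i) < ∑ i ∈ T, weight (g i)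

lemma IsUF.exists_mergeReduced {M : ℕ} (N : ℕ) (hg : IsUF g) (hM : ∀ i, M • g i = 0) :
    ∃ g' : ι → G, IsUF g' ∧ (∀ i, M • g' i = 0) ∧ MergeReduced N g' ∧
      ∑ i, weight (g i) ≤ ∑ i, weight (g' i) := by
  classical
  induction hs : ({i | N • g i ≠ 0} : Finset ι) using Finset.strongInduction generalizing g with
  | H s ih =>
    by_cases hred : MergeReduced N g
    · exact ⟨g, hg, hM, hred, le_rfl⟩
    obtain ⟨T, ⟨t, ht⟩, hTN, hT0, hle⟩ : ∃ T : Finset ι, T.Nonempty ∧ (∀ i ∈ T, N • g i ≠ 0) ∧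
        N • ∑ i ∈ T, g i = 0 ∧ ∑ i ∈ T, weight (g i) ≤ weight (∑ i ∈ T, g i) := by
      simpa only [MergeReduced, not_forall, exists_prop, not_lt] using hred
    obtain ⟨g₁, hg₁, hout, hin, hweight⟩ := hg.exists_merge T
    have hN : ∀ i ∈ T, N • g₁ i = 0 := fun i hi => by
      obtain h | h := hin i hi <;> simp [h, hT0]
    have hM₁ : ∀ i, M • g₁ i = 0 := fun i => by
      by_cases hi : i ∈ T
      · obtain h | h := hin i hi <;> simp [h, smul_sum, hM]
      · rw [hout i hi, hM i]
    have hssub : ({i | N • g₁ i ≠ 0} : Finset ι) ⊂ s := by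
      rw [← hs, ssubset_iff_of_subset (by grind)]
      exact ⟨t, by simp [hTN t ht], by simp [hN t ht]⟩
    obtain ⟨g₂, hg₂, hM₂, hred₂, hle₂⟩ := ih _ hssub hg₁ hM₁ rfl
    refine ⟨g₂, hg₂, hM₂, hred₂, le_trans ?_ hle₂⟩
    rw [← sum_add_sum_compl T, ← sum_add_sum_compl T fun i => weight (g₁ i), hweight]
    gcongr with i hi
    rw [hout i (mem_compl.1 hi)]

lemma IsUF.nsmul_sum_eq_zero {N : ℕ} {A : Finset ι} (hg : IsUF g) (hA : ∀ i ∉ A, N • g i = 0) :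
    N • ∑ i ∈ A, g i = 0 := by
  have hcompl : N • ∑ i ∈ Aᶜ, g i = 0 := by
    rw [smul_sum, sum_eq_zero fun i hi => hA i (mem_compl.1 hi)]
  rw [eq_sub_of_add_eq (sum_add_sum_compl A g), hg.1, zero_sub, smul_neg, hcompl, neg_zero]

/-- Merging both `T` and `A \ T` leaves a family that is killed by `N`. -/
lemma IsUF.sum_weight_compl_add_weight_le {N : ℕ} {c : ℝ} {A T : Finset ι} (hg : IsUF g)
    (hc : ∀ g' : ι → G, IsUF g' → (∀ i, N • g' i = 0) → ∑ i, weight (g' i) ≤ c)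
    (hA : ∀ i ∉ A, N • g i = 0) (hTA : T ⊆ A) (hT : N • ∑ i ∈ T, g i = 0) :
    ∑ i ∈ Aᶜ, weight (g i) + weight (∑ i ∈ T, g i) ≤ c := by
  obtain ⟨g₁, hg₁, hout₁, hin₁, hweight₁⟩ := hg.exists_merge T
  obtain ⟨g₂, hg₂, hout₂, hin₂, -⟩ := hg₁.exists_merge (A \ T)
  have hAT : N • ∑ i ∈ A \ T, g₁ i = 0 := by
    rw [sum_congr rfl fun i hi => hout₁ i (mem_sdiff.1 hi).2, sum_sdiff_eq_sub hTA, smul_sub,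
      hg.nsmul_sum_eq_zero hA, hT, sub_zero]
  have hN : ∀ i, N • g₂ i = 0 := fun i => by
    by_cases hi : i ∈ A \ T
    · obtain h | h := hin₂ i hi <;> simp [h, hAT]
    rw [hout₂ i hi]
    by_cases hiT : i ∈ T
    · obtain h | h := hin₁ i hiT <;> simp [h, hT]
    · rw [hout₁ i hiT, hA i fun hiA => hi (mem_sdiff.2 ⟨hiA, hiT⟩)]
  have hcompl : ∀ i ∈ Aᶜ, weight (g i) = weight (g₂ i) := fun i hi => by
    have hiA := mem_compl.1 hi
    rw [hout₂ i fun h => hiA (mem_sdiff.1 h).1, hout₁ i fun h => hiA (hTA h)]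
  have hT₂ : ∀ i ∈ T, weight (g₁ i) = weight (g₂ i) := fun i hi => by
    rw [hout₂ i fun h => (mem_sdiff.1 h).2 hi]
  calc ∑ i ∈ Aᶜ, weight (g i) + weight (∑ i ∈ T, g i)
      = ∑ i ∈ Aᶜ ∪ T, weight (g₂ i) := by
        rw [sum_union (disjoint_compl_left.mono_right hTA), ← hweight₁,
          sum_congr rfl hcompl, sum_congr rfl hT₂]
    _ ≤ ∑ i, weight (g₂ i) :=
        sum_le_sum_of_subset_of_nonneg (subset_univ _) fun i _ _ => weight_nonneg _
    _ ≤ c := hc g₂ hg₂ hN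

end Merging

section UpperBound

variable {ι G : Type*} [AddCommGroup G] [DecidableEq ι] {g : ι → G} {X : Finset ι} {N p d : ℕ}

lemma InterClosed.nsmul (hg : InterClosed g X)
    (h : ∀ T ⊂ X, N • ∑ i ∈ T, g i = 0 → ∑ i ∈ T, g i = 0) :
    InterClosed (fun i => N • g i) X := by
  intro A hA B hB hA0 hB0
  obtain rfl | hAX := hA.eq_or_ssubset
  · rwa [inter_eq_right.2 hB]
  obtain rfl | hBX := hB.eq_or_ssubset
  · rwa [inter_eq_left.2 hA]
  rw [← smul_sum] at hA0 hB0 ⊢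
  rw [hg A hA B hB (h A hAX hA0) (h B hBX hB0), smul_zero]

lemma prime_pow_dvd_addOrderOf_of_two_mul {k : ℕ} {x : G} (hp : p.Prime)
    (hN : (2 * p ^ k) • x ≠ 0) (hM : (2 * p ^ (k + 1)) • x = 0) : p ^ (k + 1) ∣ addOrderOf x := by
  rw [mul_comm, mul_smul] at hN hM
  exact prime_pow_dvd_addOrderOf hp hN hM

lemma two_mul_prime_pow_dvd_addOrderOf {k : ℕ} {x : G} (hp : p.Prime) (hp2 : p ≠ 2)
    (hN : (2 * p ^ k) • x ≠ 0) (hM : (2 * p ^ (k + 1)) • x = 0) (hx : p ^ (k + 1) • x ≠ 0) :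
    2 * p ^ (k + 1) ∣ addOrderOf x := by
  have h2 : 2 ∣ addOrderOf x := by
    simpa using prime_pow_dvd_addOrderOf (k := 0) (a := p ^ (k + 1)) Nat.prime_two
      (by simpa using hx) (by simpa [mul_smul] using hM)
  have hcop : Nat.Coprime 2 (p ^ (k + 1)) :=
    Nat.coprime_two_left.2 (hp.odd_of_ne_two hp2).pow
  exact hcop.mul_dvd_of_dvd_of_dvd h2 (prime_pow_dvd_addOrderOf_of_two_mul hp hN hM)

lemma nsmul_eq_zero_of_two_mul_nsmul_eq_zero {n : ℕ} {x : G} (hn : Odd n) (h2 : (2 * d) • x = 0)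
    (hx : n • x = 0) : d • x = 0 := by
  rw [← addOrderOf_dvd_iff_nsmul_eq_zero] at *
  exact (Nat.Coprime.coprime_dvd_left hx (Nat.coprime_two_right.2 hn)).dvd_of_dvd_mul_left h2

variable [Fintype G] [DecidableEq G]

lemma InterClosed.card_le_of_nsmul (hg : InterClosed g X) (hN : ∀ i ∈ X, N • g i ≠ 0)
    (hpN : ∀ i ∈ X, p • N • g i = 0) (hp : #{x : G | p • x = 0} ≤ p)
    (h : ∀ T ⊂ X, N • ∑ i ∈ T, g i = 0 → ∑ i ∈ T, g i = 0) : #X ≤ p :=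
  ((hg.nsmul h).card_le_card_nsmul_eq_zero hN hpN).trans hp

/-- A minimal counterexample `T` has at most `p` entries, so merging it would not decrease the
total weight. -/
lemma MergeReduced.sum_eq_zero_of_nsmul (hred : MergeReduced N g) (hg : InterClosed g X)
    (hN : ∀ i ∈ X, N • g i ≠ 0) (hpN : ∀ i ∈ X, p • N • g i = 0) (hp : #{x : G | p • x = 0} ≤ p)
    (hp0 : 0 < p) (hd : 0 < d) (hord : ∀ i ∈ X, p * d ∣ addOrderOf (g i))
    (hNd : ∀ T ⊆ X, N • ∑ i ∈ T, g i = 0 → d • ∑ i ∈ T, g i = 0) :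
    ∀ T ⊆ X, N • ∑ i ∈ T, g i = 0 → ∑ i ∈ T, g i = 0 := by
  intro T
  induction T using Finset.strongInduction with
  | H T ih =>
    intro hTX hT0
    by_contra hne
    have hcard : #T ≤ p := (hg.mono hTX).card_le_of_nsmul (fun i hi => hN i (hTX hi))
      (fun i hi => hpN i (hTX hi)) hp fun S hST => ih S hST (hST.subset.trans hTX)
    refine (hred T (nonempty_of_sum_ne_zero hne) (fun i hi => hN i (hTX hi)) hT0).not_ge ?_
    exact (sum_weight_le_one_div hp0 hcard fun i hi => hord i (hTX hi)).trans
      (one_div_le_weight hne hd (hNd T hTX hT0))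

lemma MergeReduced.sum_weight_le (hred : MergeReduced N g) (hg : InterClosed g X)
    (hN : ∀ i ∈ X, N • g i ≠ 0) (hpN : ∀ i ∈ X, p • N • g i = 0) (hp : #{x : G | p • x = 0} ≤ p)
    (hp0 : 0 < p) (hd : 0 < d) (hord : ∀ i ∈ X, p * d ∣ addOrderOf (g i))
    (hNd : ∀ T ⊆ X, N • ∑ i ∈ T, g i = 0 → d • ∑ i ∈ T, g i = 0) :
    ∑ i ∈ X, weight (g i) ≤ 1 / (d : ℝ) :=
  sum_weight_le_one_div hp0 (hg.card_le_of_nsmul hN hpN hp fun T hT =>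
    hred.sum_eq_zero_of_nsmul hg hN hpN hp hp0 hd hord hNd T hT.subset) hord

/-- The entries killed by `p ^ (k + 1)` contribute at most `1 / p ^ k`, the others, whose orders are
even, at most half as much. -/
lemma MergeReduced.sum_weight_le_three_halves {k : ℕ} (hp : p.Prime) (hp2 : p ≠ 2)
    (hred : MergeReduced (2 * p ^ k) g) (hg : InterClosed g X)
    (hN : ∀ i ∈ X, (2 * p ^ k) • g i ≠ 0) (hM : ∀ i ∈ X, (2 * p ^ (k + 1)) • g i = 0)
    (hcard : #{x : G | p • x = 0} ≤ p) :
    ∑ i ∈ X, weight (g i) ≤ 3 / 2 / (p : ℝ) ^ k := by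
  have hpN : ∀ i ∈ X, p • (2 * p ^ k) • g i = 0 := fun i hi => by
    rw [← mul_smul, mul_left_comm, ← pow_succ', hM i hi]
  have hodd : ∑ i ∈ X with p ^ (k + 1) • g i = 0, weight (g i) ≤ 1 / ((p ^ k : ℕ) : ℝ) := by
    refine hred.sum_weight_le (hg.mono (filter_subset _ X))
      (fun i hi => hN i (filter_subset _ X hi)) (fun i hi => hpN i (filter_subset _ X hi)) hcard
      hp.pos (pow_pos hp.pos k) (fun i hi => ?_) fun T hT hT0 => ?_
    · have hiX := filter_subset _ X hi
      exact pow_succ' p k ▸ prime_pow_dvd_addOrderOf_of_two_mul hp (hN i hiX) (hM i hiX)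
    · refine nsmul_eq_zero_of_two_mul_nsmul_eq_zero (hp.odd_of_ne_two hp2).pow hT0
        (n := p ^ (k + 1)) ?_
      rw [smul_sum, sum_eq_zero fun i hi => (mem_filter.1 (hT hi)).2]
  have heven : ∑ i ∈ X with p ^ (k + 1) • g i ≠ 0, weight (g i) ≤ 1 / ((2 * p ^ k : ℕ) : ℝ) := by
    refine hred.sum_weight_le (hg.mono (filter_subset _ X))
      (fun i hi => hN i (filter_subset _ X hi)) (fun i hi => hpN i (filter_subset _ X hi)) hcard
      hp.pos (mul_pos two_pos (pow_pos hp.pos k)) (fun i hi => ?_) fun T _ => id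
    obtain ⟨hiX, hi⟩ := mem_filter.1 hi
    rw [mul_left_comm, ← pow_succ']
    exact two_mul_prime_pow_dvd_addOrderOf hp hp2 (hN i hiX) (hM i hiX) hi
  calc ∑ i ∈ X, weight (g i) ≤ 1 / ((p ^ k : ℕ) : ℝ) + 1 / ((2 * p ^ k : ℕ) : ℝ) :=
        (sum_filter_add_sum_filter_not X (p ^ (k + 1) • g · = 0) _).ge.trans (add_le_add hodd heven)
    _ = 3 / 2 / (p : ℝ) ^ k := by push_cast; field_simp; norm_num

/-- With `A` the set of entries not killed by `2 * p ^ k`: if some `T ⊆ A` has a nonzero sum killed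
by `2 * p ^ k`, then merging `T` and `A \ T` loses at most `(3 / 2 - 1 / 2) / p ^ k`. Otherwise `A`
has at most `p` entries, of weight at most `1 / p ^ (k + 1)` each. -/
lemma MergeReduced.sum_weight_le_add [Fintype ι] {k : ℕ} {c : ℝ} (hp : p.Prime) (hp2 : p ≠ 2)
    (hcard : #{x : G | p • x = 0} ≤ p)
    (hc : ∀ g' : ι → G, IsUF g' → (∀ i, (2 * p ^ k) • g' i = 0) → ∑ i, weight (g' i) ≤ c)
    (hred : MergeReduced (2 * p ^ k) g) (hg : IsUF g) (hM : ∀ i, (2 * p ^ (k + 1)) • g i = 0) :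
    ∑ i, weight (g i) ≤ c + 1 / (p : ℝ) ^ k := by
  set A : Finset ι := {i | (2 * p ^ k) • g i ≠ 0} with hA
  have hAN : ∀ i ∈ A, (2 * p ^ k) • g i ≠ 0 := by simp [hA]
  have hmerge : ∀ T ⊆ A, (2 * p ^ k) • ∑ i ∈ T, g i = 0 →
      ∑ i ∈ Aᶜ, weight (g i) + weight (∑ i ∈ T, g i) ≤ c := fun T =>
    hg.sum_weight_compl_add_weight_le hc (by simp [hA])
  rw [← sum_compl_add_sum A]
  by_cases hT : ∀ T ⊆ A, (2 * p ^ k) • ∑ i ∈ T, g i = 0 → ∑ i ∈ T, g i = 0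
  · have hAcard : #A ≤ p := (hg.interClosed A).card_le_of_nsmul hAN
      (fun i _ => by rw [← mul_smul, mul_left_comm, ← pow_succ', hM i]) hcard
      fun T hTA => hT T hTA.subset
    have hsumA : ∑ i ∈ A, weight (g i) ≤ 1 / ((p ^ k : ℕ) : ℝ) :=
      sum_weight_le_one_div hp.pos hAcard fun i hi =>
        pow_succ' p k ▸ prime_pow_dvd_addOrderOf_of_two_mul hp (hAN i hi) (hM i)
    have hcompl := hmerge ∅ (empty_subset A) (by simp)
    rw [sum_empty, weight_zero, add_zero] at hcompl
    exact add_le_add hcompl (by exact_mod_cast hsumA)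
  · push Not at hT
    obtain ⟨T, hTA, hT0, hTne⟩ := hT
    have hA32 := hred.sum_weight_le_three_halves hp hp2 (hg.interClosed A) hAN (fun i _ => hM i)
      hcard
    have hTweight := one_div_le_weight hTne (mul_pos two_pos (pow_pos hp.pos k)) hT0
    have hsplit : 3 / 2 / (p : ℝ) ^ k = 1 / (p : ℝ) ^ k + 1 / ((2 * p ^ k : ℕ) : ℝ) := by
      push_cast; field_simp; norm_num
    linarith [hmerge T hTA hT0]

theorem IsUF.sum_weight_le [Fintype ι] {m n : ℕ} (hp : p.Prime) (hp2 : p ≠ 2)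
    (hcard : #{x : G | p • x = 0} ≤ p) (hcard2 : #{x : G | 2 • x = 0} ≤ 2 ^ n)
    (hg : IsUF g) (hM : ∀ i, (2 * p ^ m) • g i = 0) :
    ∑ i, weight (g i) ≤ ∑ k ∈ range m, 1 / (p : ℝ) ^ k + n := by
  induction m generalizing g with
  | zero => simpa using hg.2.sum_weight_le_of_two_nsmul (by simpa using hM) hcard2
  | succ k ih =>
    rw [sum_range_succ, add_right_comm]
    obtain ⟨g', hg', hM', hred, hle⟩ := hg.exists_mergeReduced (2 * p ^ k) hM
    exact hle.trans (hred.sum_weight_le_add hp hp2 hcard (fun g' hg' => ih hg') hg' hM')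

end UpperBound

section LowerBound

variable {ι κ G : Type*} [AddCommGroup G] [Fintype ι] [DecidableEq ι] [Fintype κ] [DecidableEq κ]

lemma crossNum_eq_sum_weight {ℓ : ℕ} {g : Fin ℓ → G} (hne : ∀ i, g i ≠ 0) :
    crossNum g = ∑ i, weight (g i) :=
  sum_congr rfl fun i _ => (weight_of_ne_zero (hne i)).symm

lemma IsUF.comp_equiv {g : ι → G} (hg : IsUF g) (e : κ ≃ ι) : IsUF (g ∘ e) := by
  have h : pushforward e.symm g = g ∘ e := by
    ext k
    simp [pushforward, Equiv.symm_apply_eq, filter_eq']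
  exact h ▸ hg.pushforward e.symm

lemma IsUF.sumElim {H : AddSubgroup G} {g : ι → G} {b : κ → G} (hg : IsUF g) (hgH : ∀ i, g i ∈ H)
    (hb : ∑ k, b k = 0) (hbH : ∀ B, ∑ k ∈ B, b k ∈ H → B = ∅ ∨ B = univ) :
    IsUF (Sum.elim g b) := by
  have hsum (A : Finset (ι ⊕ κ)) :
      ∑ i ∈ A, Sum.elim g b i = ∑ i ∈ A.toLeft, g i + ∑ k ∈ A.toRight, b k := by
    simp [sum_sum_eq_sum_toLeft_add_sum_toRight]
  have hsplit {A : Finset (ι ⊕ κ)} (hA : ∑ i ∈ A, Sum.elim g b i = 0) :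
      ∑ i ∈ A.toLeft, g i = 0 ∧ (A.toRight = ∅ ∨ A.toRight = univ) := by
    rw [hsum] at hA
    have hright := hbH A.toRight <| by
      rw [← neg_eq_of_add_eq_zero_right hA]
      exact H.neg_mem (H.sum_mem fun i _ => hgH i)
    refine ⟨?_, hright⟩
    obtain h | h := hright <;> simpa [h, hb] using hA
  refine ⟨by simp [hg.1, hb], fun A _ B _ hA hB => ?_⟩
  obtain ⟨hAl, hAr⟩ := hsplit hA
  obtain ⟨hBl, hBr⟩ := hsplit hB
  rw [hsum, toLeft_inter, toRight_inter, hg.2 _ (subset_univ _) _ (subset_univ _) hAl hBl, zero_add]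
  obtain h | h := hAr <;> obtain h' | h' := hBr <;> simp [h, h', hb]

/-- The minimal zero-sum family consisting of `q - 1` copies of `x` and one entry `(1 - q) • x`. -/
def closingBlock (q : ℕ) [NeZero q] (x : G) (j : Fin q) : G :=
  (1 - if j = 0 then (q : ℤ) else 0) • x

variable {q : ℕ} [NeZero q] {x : G}

lemma sum_closingBlock : ∑ j, closingBlock q x j = 0 := by
  simp [closingBlock, ← sum_smul]

variable {H : AddSubgroup G}

lemma dvd_card_of_sum_closingBlock_mem (hx : ∀ j : ℤ, j • x ∈ H → (q : ℤ) ∣ j)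
    {B : Finset (Fin q)} (hB : ∑ j ∈ B, closingBlock q x j ∈ H) : q ∣ #B := by
  simp only [closingBlock, ← sum_smul, sum_sub_distrib] at hB
  have hdvd : (q : ℤ) ∣ ∑ j ∈ B, if j = 0 then (q : ℤ) else 0 :=
    dvd_sum fun j _ => by split_ifs <;> simp
  have := (dvd_sub_left hdvd).1 (hx _ hB)
  simpa [Int.natCast_dvd_natCast] using this

lemma eq_empty_or_eq_univ_of_sum_closingBlock_mem (hx : ∀ j : ℤ, j • x ∈ H → (q : ℤ) ∣ j)
    {B : Finset (Fin q)} (hB : ∑ j ∈ B, closingBlock q x j ∈ H) : B = ∅ ∨ B = univ := by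
  have hdvd := dvd_card_of_sum_closingBlock_mem hx hB
  obtain h | h := (#B).eq_zero_or_pos
  · exact .inl (card_eq_zero.1 h)
  · refine .inr ((card_eq_iff_eq_univ B).1 ((card_le_univ B).antisymm ?_))
    rw [Fintype.card_fin]
    exact Nat.le_of_dvd h hdvd

lemma closingBlock_ne_zero (hq : q ≠ 1) (hx : ∀ j : ℤ, j • x ∈ H → (q : ℤ) ∣ j) (j : Fin q) :
    closingBlock q x j ≠ 0 := fun h0 => by
  have hdvd := dvd_card_of_sum_closingBlock_mem hx (B := {j}) (by simp [h0])
  rw [card_singleton, Nat.dvd_one] at hdvd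
  exact hq hdvd

/-- Some unique factorization indexed multiset with entries in `H` has cross number at least `w`. -/
def AttainsCrossNum (H : AddSubgroup G) (w : ℝ) : Prop :=
  ∃ (ℓ : ℕ) (g : Fin ℓ → G), IsUFIM g ∧ (∀ i, g i ∈ H) ∧ w ≤ crossNum g

lemma IsUF.attainsCrossNum {g : ι → G} {w : ℝ} (hg : IsUF g) (hne : ∀ i, g i ≠ 0)
    (hgH : ∀ i, g i ∈ H) (hw : w ≤ ∑ i, weight (g i)) : AttainsCrossNum H w := by
  let e := (Fintype.equivFin ι).symm
  refine ⟨_, g ∘ e, isUFIM_iff.2 ⟨fun i => hne (e i), hg.comp_equiv e⟩, fun i => hgH (e i), ?_⟩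
  rw [crossNum_eq_sum_weight (g := g ∘ e) fun i => hne (e i)]
  exact hw.trans_eq (e.sum_comp fun i => weight (g i)).symm

variable {w : ℝ}

lemma attainsCrossNum_zero (H : AddSubgroup G) : AttainsCrossNum H 0 :=
  IsUF.attainsCrossNum (g := Fin.elim0) (by simp [IsUF, InterClosed]) (fun i => i.elim0)
    (fun i => i.elim0) (by simp)

lemma AttainsCrossNum.add_div {K : AddSubgroup G} {N : ℕ} (h : AttainsCrossNum H w) (hHK : H ≤ K)
    (hxK : x ∈ K) (hq : q ≠ 1) (hx : ∀ j : ℤ, j • x ∈ H → (q : ℤ) ∣ j) (hN : 0 < N)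
    (hNx : N • x = 0) : AttainsCrossNum K (w + q / N) := by
  obtain ⟨ℓ, g, hg, hgH, hw⟩ := h
  obtain ⟨hne, hg⟩ := isUFIM_iff.1 hg
  have hbne := closingBlock_ne_zero hq hx
  have hbN (j : Fin q) : 1 / (N : ℝ) ≤ weight (closingBlock q x j) :=
    one_div_le_weight (hbne j) hN (by rw [closingBlock, smul_comm, hNx, smul_zero])
  refine (hg.sumElim hgH sum_closingBlock fun B =>
    eq_empty_or_eq_univ_of_sum_closingBlock_mem hx).attainsCrossNum ?_ ?_ ?_
  · rintro (i | j)
    exacts [hne i, hbne j]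
  · rintro (i | j)
    exacts [hHK (hgH i), zsmul_mem hxK _]
  · rw [Fintype.sum_sum_type]
    simp only [Sum.elim_inl, Sum.elim_inr]
    rw [← crossNum_eq_sum_weight hne]
    gcongr
    calc (q : ℝ) / N = ∑ _j : Fin q, 1 / (N : ℝ) := by simp [div_eq_mul_inv]
      _ ≤ _ := sum_le_sum fun j _ => hbN j

end LowerBound

section CyclicTimesElementary

variable {p m n : ℕ}

lemma attainsCrossNum_prod_pi (K : Type*) [AddCommGroup K] (s : Finset (Fin n)) :
    AttainsCrossNum ((⊥ : AddSubgroup K).prod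
      (AddSubgroup.pi ((s : Set (Fin n))ᶜ) fun _ => (⊥ : AddSubgroup (ZMod 2)))) (#s : ℝ) := by
  induction s using Finset.induction with
  | empty => simpa using attainsCrossNum_zero _
  | insert i s hi ih =>
    let x : K × (Fin n → ZMod 2) := (0, Pi.single i 1)
    have hx (j : ℤ) (hj : j • x ∈ (⊥ : AddSubgroup K).prod
        (AddSubgroup.pi ((s : Set (Fin n))ᶜ) fun _ => (⊥ : AddSubgroup (ZMod 2)))) :
        ((2 : ℕ) : ℤ) ∣ j := by
      have hji := hj.2 i (by simpa using hi)
      rw [← ZMod.intCast_zmod_eq_zero_iff_dvd]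
      simpa [x] using hji
    have h2x : 2 • x = 0 := by
      have h2 : 2 • (1 : ZMod 2) = 0 := by decide
      simp [x, ← Pi.single_smul, h2]
    rw [card_insert_of_notMem hi, Nat.cast_succ, ← div_self (two_ne_zero' ℝ)]
    refine ih.add_div (q := 2) (N := 2) (fun v hv => ⟨hv.1, fun k hk => hv.2 k ?_⟩)
      ⟨AddSubgroup.mem_bot.2 rfl, fun k hk => ?_⟩ (by norm_num) hx two_pos h2x
    · simp_all
    · have : k ≠ i := by simp_all
      simp [x, this]

lemma dvd_of_pow_nsmul_zsmul_natCast_eq_zero (hp : p ≠ 0) {k r : ℕ} {j : ℤ}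
    (h : p ^ k • j • ((p ^ r : ℕ) : ZMod (p ^ (k + r + 1))) = 0) : (p : ℤ) ∣ j := by
  have h' : ((p ^ (k + r) * j : ℤ) : ZMod (p ^ (k + r + 1))) = 0 := by
    rw [← h]
    push_cast [nsmul_eq_mul, zsmul_eq_mul]
    ring
  rw [ZMod.intCast_zmod_eq_zero_iff_dvd, Nat.cast_pow, pow_succ] at h'
  exact (mul_dvd_mul_iff_left (pow_ne_zero _ (Nat.cast_ne_zero.2 hp))).1 h'

lemma attainsCrossNum_torsionBy_prod_top (hp : 1 < p) {k : ℕ} (hk : k ≤ m) :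
    AttainsCrossNum ((AddSubgroup.torsionBy (ZMod (p ^ m)) (p ^ k : ℕ)).prod
      (⊤ : AddSubgroup (Fin n → ZMod 2))) (∑ i ∈ range k, 1 / (p : ℝ) ^ i + n) := by
  have : NeZero p := ⟨by lia⟩
  induction k with
  | zero =>
    convert attainsCrossNum_prod_pi (ZMod (p ^ m)) (univ : Finset (Fin n)) using 1
    · ext ⟨a, v⟩
      simp [AddSubgroup.mem_prod, AddSubgroup.mem_pi]
    · simp
  | succ k ih =>
    obtain ⟨r, rfl⟩ := Nat.exists_eq_add_of_lt hk
    let a : ZMod (p ^ (k + r + 1)) := (p ^ r : ℕ)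
    have hpa : p ^ (k + 1) • a = 0 := by
      rw [nsmul_eq_mul, ← Nat.cast_mul, ← pow_add, add_right_comm, ZMod.natCast_self]
    have hdiv : 1 / (p : ℝ) ^ k = p / (p ^ (k + 1) : ℕ) := by
      field_simp
      push_cast
      ring
    rw [sum_range_succ, hdiv, add_right_comm (_ : ℝ)]
    refine (ih (by lia)).add_div (x := (a, 0)) (AddSubgroup.prod_mono (fun b hb => ?_) le_rfl)
      ⟨AddSubgroup.torsionBy.nsmul_iff.2 hpa, trivial⟩ hp.ne' (fun j hj => ?_) (by positivity)
      (Prod.ext hpa (smul_zero (p ^ (k + 1))))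
    · rw [AddSubgroup.torsionBy.nsmul_iff] at hb ⊢
      rw [pow_succ' p k, mul_smul, hb, smul_zero]
    · exact dvd_of_pow_nsmul_zsmul_natCast_eq_zero (by lia) (AddSubgroup.torsionBy.nsmul_iff.1 hj.1)

lemma card_nsmul_eq_zero_le_of_ker {G A : Type*} [AddCommGroup G] [AddCommGroup A] [Fintype G]
    [Fintype A] [DecidableEq G] [DecidableEq A] {q N : ℕ} (hqN : q.Coprime N) (f : G →+ A)
    (hf : ∀ x, f x = 0 → N • x = 0) : #{x : G | q • x = 0} ≤ #{a : A | q • a = 0} := by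
  refine card_le_card_of_injOn f (fun x hx => ?_) fun x hx y hy hxy => ?_
  · simp_all [← map_nsmul]
  · have hq : q • (x - y) = 0 := by simp_all [smul_sub]
    have hN : N • (x - y) = 0 := hf _ (by rw [map_sub, hxy, sub_self])
    rw [← sub_eq_zero, ← AddMonoid.addOrderOf_eq_one_iff]
    exact Nat.eq_one_of_dvd_coprimes hqN (addOrderOf_dvd_of_nsmul_eq_zero hq)
      (addOrderOf_dvd_of_nsmul_eq_zero hN)

lemma pi_two_nsmul_eq_zero (v : Fin n → ZMod 2) : 2 • v = 0 :=
  funext fun i => CharTwo.two_nsmul (v i)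

lemma IsUFIM.crossNum_le {ℓ : ℕ} {g : Fin ℓ → ZMod (p ^ m) × (Fin n → ZMod 2)} (hp : p.Prime)
    (hp2 : p ≠ 2) (hg : IsUFIM g) : crossNum g ≤ ∑ k ∈ range m, 1 / (p : ℝ) ^ k + n := by
  have : NeZero (p ^ m) := ⟨pow_ne_zero _ hp.ne_zero⟩
  have hcop : p.Coprime 2 := (Nat.coprime_primes hp Nat.prime_two).2 hp2
  have hpm (a : ZMod (p ^ m)) : p ^ m • a = 0 := by rw [nsmul_eq_mul, ZMod.natCast_self, zero_mul]
  have hcard : #{x : ZMod (p ^ m) × (Fin n → ZMod 2) | p • x = 0} ≤ p :=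
    (card_nsmul_eq_zero_le_of_ker hcop (AddMonoidHom.fst _ _) fun x hx =>
      Prod.ext (by simp_all) (pi_two_nsmul_eq_zero x.2)).trans
      (IsAddCyclic.card_nsmul_eq_zero_le hp.pos)
  have hcard2 : #{x : ZMod (p ^ m) × (Fin n → ZMod 2) | 2 • x = 0} ≤ 2 ^ n :=
    (card_nsmul_eq_zero_le_of_ker (hcop.symm.pow_right m) (AddMonoidHom.snd _ _) fun x hx =>
      Prod.ext (hpm x.1) (by simp_all)).trans ((card_le_univ _).trans_eq (by simp))
  rw [isUFIM_iff] at hg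
  rw [crossNum_eq_sum_weight hg.1]
  refine hg.2.sum_weight_le hp hp2 hcard hcard2 fun i => Prod.ext ?_ ?_
  · rw [Prod.smul_fst, mul_smul, hpm, smul_zero, Prod.fst_zero]
  · rw [Prod.smul_snd, mul_comm, mul_smul, pi_two_nsmul_eq_zero, smul_zero, Prod.snd_zero]

lemma sum_one_div_pow_eq_div (hp : 1 < p) (hm : 1 ≤ m) :
    ∑ k ∈ range m, 1 / (p : ℝ) ^ k = (p ^ m - 1) / (p ^ m - p ^ (m - 1)) := by
  obtain ⟨m, rfl⟩ := Nat.exists_eq_add_of_le' hm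
  have hp1 : (p : ℝ) ≠ 1 := by exact_mod_cast hp.ne'
  have hp0 : (p : ℝ) ≠ 0 := by exact_mod_cast (zero_lt_one.trans hp).ne'
  have hp1' : (p : ℝ) - 1 ≠ 0 := sub_ne_zero.2 hp1
  simp only [one_div, ← inv_pow, geom_sum_inv hp1 hp0]
  rw [inv_pow, Nat.add_sub_cancel, pow_succ, ← mul_sub_one]
  field_simp

end CyclicTimesElementary

/-- `K₁(C_{p^m} ⊕ C_2^n) = Σ_{k=1}^m 1/p^{k−1} + n = (p^m − 1)/(p^m − p^{m−1}) + n`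
for an odd prime `p`. -/
theorem K1_pm_2n (p : ℕ) (hp : p.Prime) (hp2 : p ≠ 2) (m n : ℕ) (hm : 1 ≤ m) (hn : 1 ≤ n) :
    K1 (ZMod (p ^ m) × (Fin n → ZMod 2)) =
      (∑ k ∈ Finset.range m, (1 : ℝ) / (p : ℝ) ^ k) + n ∧
    K1 (ZMod (p ^ m) × (Fin n → ZMod 2)) =
      ((p : ℝ) ^ m - 1) / ((p : ℝ) ^ m - (p : ℝ) ^ (m - 1)) + n := by
  have hK1 : K1 (ZMod (p ^ m) × (Fin n → ZMod 2)) =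
      ∑ k ∈ Finset.range m, 1 / (p : ℝ) ^ k + n := by
    obtain ⟨ℓ, g, hg, -, hle⟩ := attainsCrossNum_torsionBy_prod_top (n := n) hp.one_lt (le_refl m)
    refine IsGreatest.csSup_eq ⟨⟨ℓ, g, hg, (hg.crossNum_le hp hp2).antisymm hle⟩, ?_⟩
    rintro _ ⟨ℓ, g, hg, rfl⟩
    exact hg.crossNum_le hp hp2
  exact ⟨hK1, hK1.trans (by rw [sum_one_div_pow_eq_div hp.one_lt hm])⟩
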